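/- arXiv:1007.3313 — 10 statements merged into one kernel-verified Lean document; each statement's English description precedes it below -/
import Mathlib

section
/- Let E be a real inner product space and F : E → E a continuous linear map that is skew-adjoint, i.e. ⟨F x, y⟩ = -⟨x, F y⟩ for all x, y ∈ E. Let s be a natural number, β₀, …, β_s real numbers (with the convention β_j = 0 for j > s), and define S_ℓ = Σ_{j=0}^{2ℓ} (-1)^{ℓ+j} β_j β_{2ℓ-j} for 0 ≤ ℓ ≤ s. Then for every θ ∈ E and every real number t, ‖Σ_{i=0}^{s} β_i t^i F^i θ‖² = Σ_{ℓ=0}^{s} S_ℓ t^{2ℓ} ‖F^ℓ θ‖². -/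
open RealInnerProductSpace Finset

/-- For a skew-adjoint continuous linear map `F` and coefficients `β₀,…,β_s` (with `β_j = 0`
for `j > s`), the squared norm of `∑ βᵢ tⁱ Fⁱ θ` is `∑ S_ℓ t^{2ℓ} ‖F^ℓ θ‖²` where
`S_ℓ = ∑_{j=0}^{2ℓ} (-1)^{ℓ+j} β_j β_{2ℓ-j}`. -/
theorem skew_adjoint_scheme_energy
    {E : Type*} [NormedAddCommGroup E] [InnerProductSpace ℝ E]
    (F : E →L[ℝ] E) (hF : ∀ x y : E, ⟪F x, y⟫ = -⟪x, F y⟫)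
    (s : ℕ) (β : ℕ → ℝ) (hβ : ∀ j, s < j → β j = 0)
    (S : ℕ → ℝ)
    (hS : ∀ ℓ, S ℓ = ∑ j ∈ range (2 * ℓ + 1), (-1 : ℝ) ^ (ℓ + j) * β j * β (2 * ℓ - j))
    (θ : E) (t : ℝ) :
    ‖∑ i ∈ range (s + 1), (β i * t ^ i) • (F ^ i) θ‖ ^ 2 =
      ∑ ℓ ∈ range (s + 1), S ℓ * t ^ (2 * ℓ) * ‖(F ^ ℓ) θ‖ ^ 2 := by
  have hG : ∀ i j, ⟪(F ^ i) θ, (F ^ j) θ⟫ = (-1 : ℝ) ^ i * ⟪θ, (F ^ (i + j)) θ⟫ := by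
    intro i
    induction i with
    | zero => intro j; simp
    | succ i ih =>
      intro j
      have h1 : (F ^ (i + 1)) θ = F ((F ^ i) θ) := by
        rw [pow_succ']; rfl
      have h2 : F ((F ^ j) θ) = (F ^ (j + 1)) θ := by
        rw [pow_succ']; rfl
      rw [h1, hF, h2, ih (j + 1), show i + 1 + j = i + (j + 1) by ring]
      ring
  have hodd : ∀ n, n % 2 = 1 → ⟪θ, (F ^ n) θ⟫ = 0 := by
    intro n hn
    have h := hG n 0
    have h2 : (-1 : ℝ) ^ n = -1 := Odd.neg_one_pow (Nat.odd_iff.mpr hn)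
    rw [h2, add_zero, real_inner_comm] at h
    simp only [pow_zero, one_apply_eq_self] at h
    linarith
  have hsq : ∀ l, ‖(F ^ l) θ‖ ^ 2 = (-1 : ℝ) ^ l * ⟪θ, (F ^ (2 * l)) θ⟫ := by
    intro l
    rw [← real_inner_self_eq_norm_sq, hG, two_mul]
  have hL : ‖∑ i ∈ range (s + 1), (β i * t ^ i) • (F ^ i) θ‖ ^ 2 =
      ∑ p ∈ range (s + 1) ×ˢ range (s + 1),
        β p.1 * β p.2 * t ^ (p.1 + p.2) * (-1 : ℝ) ^ p.1 * ⟪θ, (F ^ (p.1 + p.2)) θ⟫ := by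
    rw [← real_inner_self_eq_norm_sq, sum_inner, sum_product]
    refine sum_congr rfl fun i _ => ?_
    rw [inner_sum]
    refine sum_congr rfl fun j _ => ?_
    rw [real_inner_smul_left, real_inner_smul_right, hG]
    ring
  have hR : ∑ ℓ ∈ range (s + 1), S ℓ * t ^ (2 * ℓ) * ‖(F ^ ℓ) θ‖ ^ 2 =
      ∑ p ∈ (range (s + 1)).sigma (fun l => range (2 * l + 1)),
        β p.2 * β (2 * p.1 - p.2) * t ^ (2 * p.1) * (-1 : ℝ) ^ p.2 *
          ⟪θ, (F ^ (2 * p.1)) θ⟫ := by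
    rw [sum_sigma]
    refine sum_congr rfl fun l _ => ?_
    rw [hS, hsq, sum_mul, sum_mul]
    refine sum_congr rfl fun j _ => ?_
    have h1 : (-1 : ℝ) ^ l * (-1 : ℝ) ^ l = 1 := by
      rw [← mul_pow]; simp
    rw [pow_add]
    linear_combination (β j * β (2 * l - j) * t ^ (2 * l) * (-1 : ℝ) ^ j *
          ⟪θ, (F ^ (2 * l)) θ⟫) * h1
  rw [hL, hR]
  symm
  refine sum_bij_ne_zero (fun p _ _ => (p.2, 2 * p.1 - p.2)) ?_ ?_ ?_ ?_
  · rintro ⟨l, j⟩ _ h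
    have a1 : j ≤ s := by
      by_contra hc
      exact h (by simp [hβ j (by omega)])
    have a2 : 2 * l - j ≤ s := by
      by_contra hc
      exact h (by simp [hβ (2 * l - j) (by omega)])
    simp only [mem_product, mem_range]
    omega
  · rintro ⟨l, j⟩ h1 _ ⟨l', j'⟩ h2 _ h
    simp only [mem_sigma, mem_range] at h1 h2
    simp only [Prod.mk.injEq] at h
    obtain ⟨rfl, h⟩ := h
    obtain rfl : l = l' := by omega
    rfl
  · rintro ⟨i, j⟩ h1 h
    simp only [mem_product, mem_range] at h1
    have he : (i + j) % 2 = 0 := by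
      by_contra hc
      exact h (by simp only [hodd (i + j) (by omega), mul_zero])
    have e1 : 2 * ((i + j) / 2) = i + j := by omega
    have e2 : i + j - i = j := by omega
    refine ⟨⟨(i + j) / 2, i⟩, ?_, ?_, ?_⟩
    · simp only [mem_sigma, mem_range]
      omega
    · simp only [e1, e2]
      exact h
    · simp only [e1, e2]
  · rintro ⟨l, j⟩ h1 _
    simp only [mem_sigma, mem_range] at h1
    have e : j + (2 * l - j) = 2 * l := by omega
    simp only [e]
end

section
/- Let E be a real inner product space and F : E → E a continuous linear map that is skew-adjoint, i.e. ⟨F x, y⟩ = -⟨x, F y⟩ for all x, y ∈ E, and suppose ‖F x‖ ≤ M ‖x‖ for all x ∈ E, where M > 0. Let p ≥ 1 be an integer, set β_j = 1/j! for 0 ≤ j ≤ 2p and β_j = 0 for j > 2p, let S_q = Σ_{j=0}^{2q} (-1)^{q+j} β_j β_{2q-j}, and set K = Σ_{q=p+1}^{2p} |S_q|. Then for any C > 0 and any time step δt > 0 satisfying δt·M ≤ 1 and δt^{2p+1} M^{2p+2} ≤ 2C/K, one has for every θ ∈ E: ‖Σ_{ℓ=0}^{2p} (δt^ℓ/ℓ!)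 F^ℓ θ‖ ≤ (1 + C·δt) ‖θ‖. (This makes precise the statement that an order-2p scheme applied to a transport problem is stable at worst under the CFL-like condition δt ≤ C' (δx/a)^{(2p+2)/(2p+1)}, with M playing the role of a/δx.) -/
open RealInnerProductSpace Finset


lemma aux_inner {E : Type*} [NormedAddCommGroup E] [InnerProductSpace ℝ E]
    (F : E →L[ℝ] E) (hF : ∀ x y : E, ⟪F x, y⟫ = -⟪x, F y⟫) (θ : E) (j : ℕ) :
    ∀ x : E, ⟪x, (F ^ j) θ⟫ = (-1 : ℝ) ^ j * ⟪(F ^ j) x, θ⟫ := by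
  induction j with
  | zero => intro x; simp
  | succ n ih =>
    intro x
    have e1 : (F ^ (n + 1)) θ = F ((F ^ n) θ) := by rw [pow_succ']; rfl
    have e2 : (F ^ (n + 1)) x = (F ^ n) (F x) := by rw [pow_succ]; rfl
    have := hF x ((F ^ n) θ)
    rw [e1, e2, pow_succ, ← neg_eq_iff_eq_neg.mpr this, ih (F x)]
    ring

lemma aux_even (h : ℕ → ℝ) (hodd : ∀ q, h (2 * q + 1) = 0) (m : ℕ) :
    ∑ n ∈ range (2 * m + 1), h n = ∑ q ∈ range (m + 1), h (2 * q) := by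
  induction m with
  | zero => simp
  | succ m ih =>
    rw [show 2 * (m + 1) + 1 = (2 * m + 1) + 1 + 1 by ring, sum_range_succ, sum_range_succ, ih,
      sum_range_succ _ (m + 1), hodd, add_zero]
    congr 1

lemma aux_anti (f : ℕ → ℕ → ℝ) (N : ℕ) (hf : ∀ i j, N < i ∨ N < j → f i j = 0) :
    ∑ i ∈ range (N + 1), ∑ j ∈ range (N + 1), f i j
      = ∑ n ∈ range (2 * N + 1), ∑ i ∈ range (n + 1), f i (n - i) := by
  rw [← Finset.sum_product', ← Finset.sum_fiberwise_of_maps_to (t := range (2 * N + 1))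
    (g := fun x : ℕ × ℕ => x.1 + x.2)]
  · refine sum_congr rfl fun n _ => ?_
    rw [← Finset.Nat.sum_antidiagonal_eq_sum_range_succ f n]
    apply sum_subset
    · intro x hx
      simp only [mem_filter, HasAntidiagonal.mem_antidiagonal] at hx ⊢
      exact hx.2
    · intro x hx hx'
      simp only [mem_filter, HasAntidiagonal.mem_antidiagonal, mem_product, mem_range] at hx hx'
      apply hf
      omega
  · intro x hx
    simp only [mem_product, mem_range] at hx ⊢
    omega

lemma aux_S (q : ℕ) (hq : 1 ≤ q) :
    ∑ j ∈ range (2 * q + 1), (-1 : ℝ) ^ (q + j) * (1 / (Nat.factorial j : ℝ)) *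
      (1 / (Nat.factorial (2 * q - j) : ℝ)) = 0 := by
  have h := Int.alternating_sum_range_choose_of_ne (n := 2 * q) (by omega)
  have h' : ∑ j ∈ range (2 * q + 1), (-1 : ℝ) ^ j * ((2 * q).choose j : ℝ) = 0 := by
    exact_mod_cast h
  have : ∑ j ∈ range (2 * q + 1), (-1 : ℝ) ^ (q + j) * (1 / (Nat.factorial j : ℝ)) *
      (1 / (Nat.factorial (2 * q - j) : ℝ)) = (-1 : ℝ) ^ q / (Nat.factorial (2 * q) : ℝ) *
      ∑ j ∈ range (2 * q + 1), (-1 : ℝ) ^ j * ((2 * q).choose j : ℝ) := by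
    rw [mul_sum]
    refine sum_congr rfl fun j hj => ?_
    rw [mem_range] at hj
    rw [Nat.cast_choose ℝ (by omega : j ≤ 2 * q), pow_add]
    have := Nat.factorial_ne_zero (2 * q)
    have := Nat.factorial_ne_zero j
    have := Nat.factorial_ne_zero (2 * q - j)
    field_simp
  rw [this, h', mul_zero]

/-- Stability of an order-`2p` scheme applied to a skew-adjoint (transport-like) operator:
if `‖F x‖ ≤ M ‖x‖`, `K = ∑_{q=p+1}^{2p} |S_q|`, and the time step satisfies
`δt·M ≤ 1` and `δt^{2p+1} M^{2p+2} ≤ 2C/K`, then the scheme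
`θ ↦ ∑_{ℓ=0}^{2p} (δt^ℓ/ℓ!) F^ℓ θ` amplifies norms by at most `1 + C·δt`. -/
theorem order_2p_scheme_stability
    {E : Type*} [NormedAddCommGroup E] [InnerProductSpace ℝ E]
    (F : E →L[ℝ] E) (hF : ∀ x y : E, ⟪F x, y⟫ = -⟪x, F y⟫)
    (M : ℝ) (hM : 0 < M) (hFM : ∀ x : E, ‖F x‖ ≤ M * ‖x‖)
    (p : ℕ) (hp : 1 ≤ p) (β : ℕ → ℝ)
    (hβ : ∀ j, j ≤ 2 * p → β j = 1 / (Nat.factorial j : ℝ))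
    (hβ' : ∀ j, 2 * p < j → β j = 0)
    (S : ℕ → ℝ)
    (hS : ∀ q, S q = ∑ j ∈ range (2 * q + 1), (-1 : ℝ) ^ (q + j) * β j * β (2 * q - j))
    (K : ℝ) (hK : K = ∑ q ∈ Icc (p + 1) (2 * p), |S q|)
    (C δt : ℝ) (hC : 0 < C) (hδt : 0 < δt)
    (h1 : δt * M ≤ 1) (h2 : δt ^ (2 * p + 1) * M ^ (2 * p + 2) ≤ 2 * C / K)
    (θ : E) :
    ‖∑ ℓ ∈ range (2 * p + 1), (δt ^ ℓ / (Nat.factorial ℓ : ℝ)) • (F ^ ℓ) θ‖ ≤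
      (1 + C * δt) * ‖θ‖ := by
  have hpow : ∀ i j (x : E), (F ^ i) ((F ^ j) x) = (F ^ (i + j)) x := by
    intro i j x; rw [pow_add]; rfl
  have hin : ∀ i j, ⟪(F ^ i) θ, (F ^ j) θ⟫ = (-1 : ℝ) ^ j * ⟪(F ^ (i + j)) θ, θ⟫ := by
    intro i j
    rw [aux_inner F hF, hpow, add_comm j i]
  have hg_odd : ∀ q, ⟪(F ^ (2 * q + 1)) θ, θ⟫ = 0 := by
    intro q
    have h := aux_inner F hF θ (2 * q + 1) θ
    have e : (-1 : ℝ) ^ (2 * q + 1) = -1 := by rw [pow_succ, pow_mul]; norm_num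
    rw [real_inner_comm, e] at h
    linarith
  have hg_even : ∀ q, ⟪(F ^ (2 * q)) θ, θ⟫ = (-1 : ℝ) ^ q * ‖(F ^ q) θ‖ ^ 2 := by
    intro q
    rw [← real_inner_self_eq_norm_sq, hin q q, ← mul_assoc, ← pow_add, ← two_mul]
    have e : (-1 : ℝ) ^ (2 * q) = 1 := by rw [pow_mul]; norm_num
    rw [e, one_mul]
  have hFn : ∀ q, ‖(F ^ q) θ‖ ≤ M ^ q * ‖θ‖ := by
    intro q
    induction q with
    | zero => simp
    | succ n ih =>
      have e1 : (F ^ (n + 1)) θ = F ((F ^ n) θ) := by rw [pow_succ']; rfl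
      rw [e1, pow_succ', mul_assoc]
      exact (hFM _).trans (mul_le_mul_of_nonneg_left ih hM.le)
  have hsum : ∑ ℓ ∈ range (2 * p + 1), (δt ^ ℓ / (Nat.factorial ℓ : ℝ)) • (F ^ ℓ) θ
      = ∑ ℓ ∈ range (2 * p + 1), (δt ^ ℓ * β ℓ) • (F ^ ℓ) θ := by
    refine sum_congr rfl fun l hl => ?_
    rw [mem_range] at hl
    rw [hβ l (by omega), mul_one_div]
  have hnorm : ‖∑ ℓ ∈ range (2 * p + 1), (δt ^ ℓ * β ℓ) • (F ^ ℓ) θ‖ ^ 2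
      = ∑ q ∈ range (2 * p + 1), δt ^ (2 * q) * S q * ‖(F ^ q) θ‖ ^ 2 := by
    rw [← real_inner_self_eq_norm_sq, sum_inner]
    simp only [inner_sum, real_inner_smul_left, real_inner_smul_right, hin]
    rw [aux_anti (fun i j => δt ^ j * β j * (δt ^ i * β i * ((-1 : ℝ) ^ j *
      ⟪(F ^ (i + j)) θ, θ⟫))) (2 * p)]
    · rw [aux_even]
      · refine sum_congr rfl fun q _ => ?_
        rw [hS, mul_sum, sum_mul]
        refine sum_congr rfl fun j hj => ?_
        rw [mem_range] at hj
        have e : j + (2 * q - j) = 2 * q := by omega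
        have e2 : (-1 : ℝ) ^ (2 * q - j) = (-1 : ℝ) ^ j := by
          have h1 : (-1 : ℝ) ^ (2 * q - j) * (-1 : ℝ) ^ j = 1 := by
            rw [← pow_add, add_comm, e, pow_mul]; norm_num
          have h2 : (-1 : ℝ) ^ j * (-1 : ℝ) ^ j = 1 := by
            rw [← pow_add, ← two_mul, pow_mul]; norm_num
          calc (-1 : ℝ) ^ (2 * q - j)
              = (-1 : ℝ) ^ (2 * q - j) * ((-1 : ℝ) ^ j * (-1 : ℝ) ^ j) := by rw [h2, mul_one]
            _ = (-1 : ℝ) ^ j := by rw [← mul_assoc, h1, one_mul]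
        have e3 : δt ^ (2 * q) = δt ^ j * δt ^ (2 * q - j) := by rw [← pow_add, e]
        simp only [e]
        rw [hg_even, e2, e3, pow_add]
        ring
      · intro q
        refine sum_eq_zero fun j hj => ?_
        rw [mem_range] at hj
        have e : j + (2 * q + 1 - j) = 2 * q + 1 := by omega
        simp only [e]
        rw [hg_odd]
        ring
    · rintro i j (h | h)
      · simp [hβ' i h]
      · simp [hβ' j h]
  have hS0 : S 0 = 1 := by
    rw [hS]; simp [hβ 0 (by omega)]
  have hSz : ∀ q, 1 ≤ q → q ≤ p → S q = 0 := by
    intro q h1 h2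
    rw [hS, ← aux_S q h1]
    refine sum_congr rfl fun j hj => ?_
    rw [mem_range] at hj
    rw [hβ j (by omega), hβ (2 * q - j) (by omega)]
  have hsplit : ∑ q ∈ range (2 * p + 1), δt ^ (2 * q) * S q * ‖(F ^ q) θ‖ ^ 2
      = ‖θ‖ ^ 2 + ∑ q ∈ Icc (p + 1) (2 * p), δt ^ (2 * q) * S q * ‖(F ^ q) θ‖ ^ 2 := by
    have hni : (0 : ℕ) ∉ Icc (p + 1) (2 * p) := by simp
    have h0 : ‖θ‖ ^ 2 = δt ^ (2 * 0) * S 0 * ‖(F ^ 0) θ‖ ^ 2 := by simp [hS0]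
    rw [h0, ← sum_insert (f := fun q => δt ^ (2 * q) * S q * ‖(F ^ q) θ‖ ^ 2) hni]
    symm
    apply sum_subset
    · intro x hx
      simp only [mem_insert, mem_Icc, mem_range] at hx ⊢
      omega
    · intro x hx hx'
      simp only [mem_insert, mem_Icc, mem_range] at hx hx'
      rw [hSz x (by omega) (by omega)]
      ring
  have hδM : 0 < δt * M := mul_pos hδt hM
  have hbound : ∑ q ∈ Icc (p + 1) (2 * p), δt ^ (2 * q) * S q * ‖(F ^ q) θ‖ ^ 2
      ≤ K * ((δt * M) ^ (2 * p + 2) * ‖θ‖ ^ 2) := by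
    rw [hK, sum_mul]
    refine sum_le_sum fun q hq => ?_
    rw [mem_Icc] at hq
    calc δt ^ (2 * q) * S q * ‖(F ^ q) θ‖ ^ 2
        ≤ δt ^ (2 * q) * |S q| * (M ^ q * ‖θ‖) ^ 2 := by
          gcongr
          · exact le_abs_self _
          · exact hFn q
      _ = |S q| * ((δt * M) ^ (2 * q) * ‖θ‖ ^ 2) := by ring
      _ ≤ |S q| * ((δt * M) ^ (2 * p + 2) * ‖θ‖ ^ 2) := by
          have := pow_le_pow_of_le_one hδM.le h1 (show 2 * p + 2 ≤ 2 * q by omega)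
          gcongr
  have hK0 : 0 ≤ K := by rw [hK]; exact sum_nonneg fun _ _ => abs_nonneg _
  have hpos : 0 < δt ^ (2 * p + 1) * M ^ (2 * p + 2) := by positivity
  have hKpos : 0 < K := by
    rcases hK0.lt_or_eq with h | h
    · exact h
    · rw [← h, div_zero] at h2
      linarith
  have hKb : K * (δt * M) ^ (2 * p + 2) ≤ 2 * C * δt := by
    rw [le_div_iff₀ hKpos] at h2
    calc K * (δt * M) ^ (2 * p + 2) = (δt ^ (2 * p + 1) * M ^ (2 * p + 2) * K) * δt := by ring
      _ ≤ 2 * C * δt := mul_le_mul_of_nonneg_right h2 hδt.le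
  rw [hsum]
  refine (sq_le_sq₀ (norm_nonneg _) (by positivity)).mp ?_
  rw [hnorm, hsplit]
  have hfin := mul_le_mul_of_nonneg_right hKb (sq_nonneg ‖θ‖)
  nlinarith [mul_nonneg (sq_nonneg (C * δt)) (sq_nonneg ‖θ‖)]
end

section
/- Let E be a real inner product space and F : E → E a continuous linear map that is skew-adjoint, i.e. ⟨F x, y⟩ = -⟨x, F y⟩ for all x, y ∈ E, and suppose ‖F x‖ ≤ M ‖x‖ for all x ∈ E, where M > 0. Let s ≥ 1, let β₀ = 1, β₁, …, β_s be real numbers with β_s ≠ 0 (β_j = 0 for j > s), and assume the stability coefficients satisfy S_ℓ = 0 for all 1 ≤ ℓ ≤ s-1. Then for every θ ∈ E and real t, ‖Σ_{ℓ=0}^{s} β_ℓ t^ℓ F^ℓ θ‖² = ‖θ‖² + β_s² t^{2s} ‖F^s θ‖²; moreover for any C > 0 and any δt > 0 with δt^{2s-1} ≤ 2C/(β_s² M^{2s}), one has ‖Σ_{ℓ=0}^{s} β_ℓ δt^ℓ F^ℓ θ‖ ≤ (1 + C·δt) ‖θ‖. (This is the general ‘shrinking CFL’ stability condition δt ≤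 (2C/β_s²)^{1/(2s-1)} (δx/a)^{2s/(2s-1)}.) -/
open RealInnerProductSpace Finset

theorem cfl_sum_even (h : ℕ → ℝ) (hodd : ∀ k, h (2 * k + 1) = 0) (m : ℕ) :
    ∑ n ∈ range (2 * m + 1), h n = ∑ l ∈ range (m + 1), h (2 * l) := by
  induction m with
  | zero => simp
  | succ m ih =>
    rw [sum_range_succ _ (m + 1), ← ih, show 2 * (m + 1) + 1 = 2 * m + 1 + 1 + 1 by ring,
      sum_range_succ, sum_range_succ, hodd, show 2 * (m + 1) = 2 * m + 1 + 1 by ring]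
    ring

theorem cfl_sum_prod (g : ℕ → ℕ → ℝ) (s : ℕ) (h1 : ∀ i j, s < i → g i j = 0)
    (h2 : ∀ i j, s < j → g i j = 0) :
    ∑ i ∈ range (s + 1), ∑ j ∈ range (s + 1), g i j =
      ∑ n ∈ range (2 * s + 1), ∑ j ∈ range (n + 1), g j (n - j) := by
  rw [← sum_product']
  rw [← sum_fiberwise_of_maps_to (s := range (s + 1) ×ˢ range (s + 1)) (t := range (2 * s + 1))
    (g := fun p : ℕ × ℕ => p.1 + p.2)]
  · refine sum_congr rfl fun n _ => ?_
    rw [← Finset.Nat.sum_antidiagonal_eq_sum_range_succ g n]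
    refine sum_subset ?_ ?_
    · intro p hp
      simp only [mem_filter] at hp
      simpa using hp.2
    · intro p hp hp'
      simp only [HasAntidiagonal.mem_antidiagonal] at hp
      simp only [mem_filter, mem_product, mem_range, hp, and_true, not_and_or, not_lt] at hp'
      rcases hp' with h | h
      · exact h1 _ _ (by omega)
      · exact h2 _ _ (by omega)
  · intro p hp
    simp only [mem_product, mem_range] at hp ⊢
    omega

theorem cfl_inner {E : Type*} [NormedAddCommGroup E] [InnerProductSpace ℝ E]
    (F : E →L[ℝ] E) (hF : ∀ x y : E, ⟪F x, y⟫ = -⟪x, F y⟫) (i : ℕ) (x y : E) :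
    ⟪(F ^ i) x, y⟫ = (-1 : ℝ) ^ i * ⟪x, (F ^ i) y⟫ := by
  induction i generalizing y with
  | zero => simp
  | succ i ih =>
    rw [pow_succ' F, ContinuousLinearMap.mul_apply, hF, ih, ← ContinuousLinearMap.mul_apply,
      ← pow_succ, pow_succ' F i, pow_succ (-1 : ℝ), ← pow_succ']
    ring

theorem cfl_identity {E : Type*} [NormedAddCommGroup E] [InnerProductSpace ℝ E]
    (F : E →L[ℝ] E) (hF : ∀ x y : E, ⟪F x, y⟫ = -⟪x, F y⟫)
    (s : ℕ) (hs : 1 ≤ s) (β : ℕ → ℝ) (hβ0 : β 0 = 1)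
    (hβ' : ∀ j, s < j → β j = 0)
    (S : ℕ → ℝ)
    (hS : ∀ ℓ, S ℓ = ∑ j ∈ range (2 * ℓ + 1), (-1 : ℝ) ^ (ℓ + j) * β j * β (2 * ℓ - j))
    (hSvanish : ∀ ℓ, 1 ≤ ℓ → ℓ ≤ s - 1 → S ℓ = 0) (θ : E) (t : ℝ) :
      ‖∑ ℓ ∈ range (s + 1), (β ℓ * t ^ ℓ) • (F ^ ℓ) θ‖ ^ 2 =
        ‖θ‖ ^ 2 + β s ^ 2 * t ^ (2 * s) * ‖(F ^ s) θ‖ ^ 2 := by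
  have hadd : ∀ i j, (F ^ i) ((F ^ j) θ) = (F ^ (i + j)) θ := fun i j => by
    rw [pow_add, ContinuousLinearMap.mul_apply]
  have hc : ∀ i j, ⟪(F ^ i) θ, (F ^ j) θ⟫ = (-1 : ℝ) ^ i * ⟪θ, (F ^ (i + j)) θ⟫ := fun i j => by
    rw [cfl_inner F hF, hadd]
  have hceven : ∀ l, ⟪θ, (F ^ (2 * l)) θ⟫ = (-1 : ℝ) ^ l * ‖(F ^ l) θ‖ ^ 2 := fun l => by
    rw [← real_inner_self_eq_norm_sq, hc, ← mul_assoc, ← mul_pow, two_mul]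
    simp
  have hcodd : ∀ l, ⟪θ, (F ^ (2 * l + 1)) θ⟫ = 0 := fun l => by
    have h := cfl_inner F hF (2 * l + 1) θ θ
    rw [real_inner_comm, Odd.neg_one_pow ⟨l, rfl⟩] at h
    linarith
  have hS0 : S 0 = 1 := by rw [hS]; simp [hβ0]
  have hSs : S s = β s ^ 2 := by
    rw [hS, sum_eq_single s]
    · rw [← two_mul, pow_mul, show 2 * s - s = s by omega]
      norm_num
      ring
    · intro j hj hne
      simp only [mem_range] at hj
      rcases lt_or_gt_of_ne hne with h | h
      · rw [hβ' (2 * s - j) (by omega), mul_zero]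
      · rw [hβ' j h, mul_zero, zero_mul]
    · intro h
      simp only [mem_range] at h
      omega
  set g : ℕ → ℕ → ℝ := fun i j =>
    (β i * t ^ i) * ((β j * t ^ j) * ((-1 : ℝ) ^ i * ⟪θ, (F ^ (i + j)) θ⟫)) with hg
  have e1 : ‖∑ ℓ ∈ range (s + 1), (β ℓ * t ^ ℓ) • (F ^ ℓ) θ‖ ^ 2 =
      ∑ i ∈ range (s + 1), ∑ j ∈ range (s + 1), g i j := by
    rw [← real_inner_self_eq_norm_sq, sum_inner]
    refine sum_congr rfl fun i _ => ?_
    rw [inner_sum]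
    refine sum_congr rfl fun j _ => ?_
    rw [real_inner_smul_left, real_inner_smul_right, hc]
  have e2 : ∀ n, ∑ j ∈ range (n + 1), g j (n - j) =
      (∑ j ∈ range (n + 1), (-1 : ℝ) ^ j * β j * β (n - j)) * (t ^ n * ⟪θ, (F ^ n) θ⟫) := by
    intro n
    rw [sum_mul]
    refine sum_congr rfl fun j hj => ?_
    obtain ⟨k, rfl⟩ := Nat.exists_eq_add_of_le (Nat.lt_succ_iff.mp (mem_range.mp hj))
    simp only [hg, Nat.add_sub_cancel_left]
    ring
  rw [e1, cfl_sum_prod g s (fun i j h => by simp [hg, hβ' i h]) (fun i j h => by simp [hg, hβ' j h]),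
    cfl_sum_even (fun n => ∑ j ∈ range (n + 1), g j (n - j))
      (fun k => by rw [e2, hcodd]; simp)]
  have e3 : ∀ l, ∑ j ∈ range (2 * l + 1), g j (2 * l - j) =
      S l * (t ^ (2 * l) * ‖(F ^ l) θ‖ ^ 2) := by
    intro l
    rw [e2, hceven, hS, sum_mul, sum_mul]
    refine sum_congr rfl fun j _ => ?_
    ring
  simp only [e3]
  obtain ⟨r, rfl⟩ : ∃ r, s = r + 1 := ⟨s - 1, by omega⟩
  rw [sum_range_succ, sum_range_succ', sum_eq_zero, hS0, hSs]
  · simp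
    ring
  · intro l hl
    rw [hSvanish (l + 1) (by omega) (by have := mem_range.mp hl; omega), zero_mul]

/-- General "shrinking CFL" stability: if `F` is skew-adjoint with `‖F x‖ ≤ M ‖x‖`,
`β₀ = 1`, `β_s ≠ 0`, and all intermediate stability coefficients `S_ℓ` vanish for
`1 ≤ ℓ ≤ s - 1`, then the scheme `θ ↦ ∑ β_ℓ t^ℓ F^ℓ θ` satisfies the exact energy identity
`‖·‖² = ‖θ‖² + β_s² t^{2s} ‖F^s θ‖²`, and is stable (`≤ (1 + C δt)‖θ‖`) under the
condition `δt^{2s-1} ≤ 2C/(β_s² M^{2s})`. -/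
theorem shrinking_CFL_stability
    {E : Type*} [NormedAddCommGroup E] [InnerProductSpace ℝ E]
    (F : E →L[ℝ] E) (hF : ∀ x y : E, ⟪F x, y⟫ = -⟪x, F y⟫)
    (M : ℝ) (hM : 0 < M) (hFM : ∀ x : E, ‖F x‖ ≤ M * ‖x‖)
    (s : ℕ) (hs : 1 ≤ s) (β : ℕ → ℝ) (hβ0 : β 0 = 1) (hβs : β s ≠ 0)
    (hβ' : ∀ j, s < j → β j = 0)
    (S : ℕ → ℝ)
    (hS : ∀ ℓ, S ℓ = ∑ j ∈ range (2 * ℓ + 1), (-1 : ℝ) ^ (ℓ + j) * β j * β (2 * ℓ - j))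
    (hSvanish : ∀ ℓ, 1 ≤ ℓ → ℓ ≤ s - 1 → S ℓ = 0) :
    (∀ (θ : E) (t : ℝ),
      ‖∑ ℓ ∈ range (s + 1), (β ℓ * t ^ ℓ) • (F ^ ℓ) θ‖ ^ 2 =
        ‖θ‖ ^ 2 + β s ^ 2 * t ^ (2 * s) * ‖(F ^ s) θ‖ ^ 2) ∧
    (∀ (C δt : ℝ), 0 < C → 0 < δt →
      δt ^ (2 * s - 1) ≤ 2 * C / (β s ^ 2 * M ^ (2 * s)) →
      ∀ θ : E,
        ‖∑ ℓ ∈ range (s + 1), (β ℓ * δt ^ ℓ) • (F ^ ℓ) θ‖ ≤ (1 + C * δt) * ‖θ‖) := by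
  have key := cfl_identity F hF s hs β hβ0 hβ' S hS hSvanish
  refine ⟨key, fun C δt hC hδ hle θ => ?_⟩
  have hpow : ∀ n, ‖(F ^ n) θ‖ ≤ M ^ n * ‖θ‖ := by
    intro n
    induction n with
    | zero => simp
    | succ n ih =>
      rw [pow_succ' F, ContinuousLinearMap.mul_apply, pow_succ' M, mul_assoc]
      exact (hFM _).trans (mul_le_mul_of_nonneg_left ih hM.le)
  have hpos : 0 < β s ^ 2 * M ^ (2 * s) := by positivity
  rw [le_div_iff₀ hpos] at hle
  have h1 : ‖(F ^ s) θ‖ ^ 2 ≤ M ^ (2 * s) * ‖θ‖ ^ 2 := by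
    have := pow_le_pow_left₀ (norm_nonneg _) (hpow s) 2
    rwa [mul_pow, ← pow_mul, mul_comm s 2] at this
  have h2 : δt ^ (2 * s) = δt * δt ^ (2 * s - 1) := by
    rw [← pow_succ']
    congr 1
    omega
  have h3 : β s ^ 2 * δt ^ (2 * s) * M ^ (2 * s) ≤ 2 * C * δt := by
    rw [h2]
    nlinarith [mul_le_mul_of_nonneg_left hle hδ.le]
  refine (pow_le_pow_iff_left₀ (norm_nonneg _) (by positivity) two_ne_zero).mp ?_
  rw [key]
  have h4 : β s ^ 2 * δt ^ (2 * s) * ‖(F ^ s) θ‖ ^ 2 ≤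
      β s ^ 2 * δt ^ (2 * s) * (M ^ (2 * s) * ‖θ‖ ^ 2) :=
    mul_le_mul_of_nonneg_left h1 (by positivity)
  have h5 := mul_le_mul_of_nonneg_right h3 (sq_nonneg ‖θ‖)
  have h6 : 0 ≤ (C * δt * ‖θ‖) ^ 2 := sq_nonneg _
  nlinarith
end

section
/- Let E be a real inner product space and F : E → E a continuous linear map that is skew-adjoint, i.e. ⟨F x, y⟩ = -⟨x, F y⟩ for all x, y ∈ E. Then for every θ ∈ E and real t, the order-two Runge–Kutta step satisfies the exact energy identity ‖θ + t F θ + (t²/2) F² θ‖² = ‖θ‖² + (t⁴/4) ‖F² θ‖². Moreover, if ‖F x‖ ≤ M ‖x‖ for all x ∈ E with M > 0, then for any C > 0 and any δt with 0 < δt ≤ 2 C^{1/3} M^{-4/3}, one has ‖θ + δt F θ + (δt²/2) F² θ‖ ≤ (1 + C·δt) ‖θ‖. -/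
open RealInnerProductSpace

/-- Order-two Runge–Kutta step for a skew-adjoint operator: exact energy identity
`‖θ + t F θ + (t²/2) F² θ‖² = ‖θ‖² + (t⁴/4) ‖F² θ‖²`, and stability under the
4/3-CFL condition `δt ≤ 2 C^{1/3} M^{-4/3}`. -/
theorem RK2_skew_adjoint_stability
    {E : Type*} [NormedAddCommGroup E] [InnerProductSpace ℝ E]
    (F : E →L[ℝ] E) (hF : ∀ x y : E, ⟪F x, y⟫ = -⟪x, F y⟫) :
    (∀ (θ : E) (t : ℝ),
      ‖θ + t • F θ + (t ^ 2 / 2) • (F ^ 2) θ‖ ^ 2 =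
        ‖θ‖ ^ 2 + t ^ 4 / 4 * ‖(F ^ 2) θ‖ ^ 2) ∧
    (∀ (M : ℝ), 0 < M → (∀ x : E, ‖F x‖ ≤ M * ‖x‖) →
      ∀ (C δt : ℝ), 0 < C → 0 < δt →
        δt ≤ 2 * C ^ ((1 : ℝ) / 3) * M ^ (-(4 : ℝ) / 3) →
        ∀ θ : E,
          ‖θ + δt • F θ + (δt ^ 2 / 2) • (F ^ 2) θ‖ ≤ (1 + C * δt) * ‖θ‖) := by
  have key : ∀ (θ : E) (t : ℝ),
      ‖θ + t • F θ + (t ^ 2 / 2) • (F ^ 2) θ‖ ^ 2 =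
        ‖θ‖ ^ 2 + t ^ 4 / 4 * ‖(F ^ 2) θ‖ ^ 2 := by
    intro θ t
    have e : (F ^ 2) θ = F (F θ) := by rw [pow_two]; rfl
    rw [e]
    have h1 := hF θ θ
    have h2 := hF (F θ) (F θ)
    have h3 := hF θ (F θ)
    rw [real_inner_comm] at h1 h2
    simp only [← real_inner_self_eq_norm_sq, inner_add_left, inner_add_right,
      real_inner_smul_left, real_inner_smul_right]
    have h1' : ⟪θ, F θ⟫ = 0 := by linarith
    have h2' : ⟪F θ, F (F θ)⟫ = 0 := by linarith
    have h1'' : ⟪F θ, θ⟫ = 0 := by rw [real_inner_comm]; exact h1'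
    have h2'' : ⟪F (F θ), F θ⟫ = 0 := by rw [real_inner_comm]; exact h2'
    have h3'' : ⟪F (F θ), θ⟫ = ⟪θ, F (F θ)⟫ := real_inner_comm _ _
    simp only [h1', h2', h1'', h2'', h3'', h3]
    ring
  refine ⟨key, ?_⟩
  intro M hM hb C d hC hd hle θ
  have e : (F ^ 2) θ = F (F θ) := by rw [pow_two]; rfl
  have hcube : d ^ 3 * M ^ 4 ≤ 8 * C := by
    have h := pow_le_pow_left₀ hd.le hle 3
    have hc : (C ^ ((1 : ℝ) / 3)) ^ 3 = C := by
      rw [← Real.rpow_natCast, ← Real.rpow_mul hC.le]; norm_num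
    have hm : (M ^ (-(4 : ℝ) / 3)) ^ 3 * M ^ 4 = 1 := by
      rw [← Real.rpow_natCast, ← Real.rpow_mul hM.le, ← Real.rpow_natCast,
        ← Real.rpow_add hM]
      norm_num
    rw [mul_pow, mul_pow, hc] at h
    calc d ^ 3 * M ^ 4 ≤ (2 ^ 3 * C * (M ^ (-(4 : ℝ) / 3)) ^ 3) * M ^ 4 := by gcongr
      _ = 8 * C * ((M ^ (-(4 : ℝ) / 3)) ^ 3 * M ^ 4) := by ring
      _ = 8 * C := by rw [hm, mul_one]
  have hF2 : ‖(F ^ 2) θ‖ ≤ M ^ 2 * ‖θ‖ := by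
    rw [e]
    calc ‖F (F θ)‖ ≤ M * ‖F θ‖ := hb _
      _ ≤ M * (M * ‖θ‖) := by gcongr; exact hb _
      _ = M ^ 2 * ‖θ‖ := by ring
  refine (pow_le_pow_iff_left₀ (norm_nonneg _) (by positivity) two_ne_zero).1 ?_
  rw [key]
  calc ‖θ‖ ^ 2 + d ^ 4 / 4 * ‖(F ^ 2) θ‖ ^ 2
      ≤ ‖θ‖ ^ 2 + d ^ 4 / 4 * (M ^ 2 * ‖θ‖) ^ 2 := by gcongr
    _ = ‖θ‖ ^ 2 + d / 4 * (d ^ 3 * M ^ 4) * ‖θ‖ ^ 2 := by ring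
    _ ≤ ‖θ‖ ^ 2 + d / 4 * (8 * C) * ‖θ‖ ^ 2 := by gcongr
    _ ≤ ‖θ‖ ^ 2 + d / 4 * (8 * C) * ‖θ‖ ^ 2 + (C * d * ‖θ‖) ^ 2 :=
        le_add_of_nonneg_right (sq_nonneg _)
    _ = ((1 + C * d) * ‖θ‖) ^ 2 := by ring
end

section
/- Let E be a real inner product space and F : E → E a continuous linear map that is skew-adjoint, i.e. ⟨F x, y⟩ = -⟨x, F y⟩ for all x, y ∈ E. Then for every θ ∈ E and real t, the three-stage scheme with coefficients β = (1, 1, 1/2, 1/8) satisfies the exact energy identity ‖θ + t F θ + (t²/2) F² θ + (t³/8) F³ θ‖² = ‖θ‖² + (t⁶/64) ‖F³ θ‖². Moreover, if ‖F x‖ ≤ M ‖x‖ for all x ∈ E with M > 0, then for any C > 0 and any δt with 0 < δt ≤ 2^{7/5} C^{1/5} M^{-6/5}, one has ‖θ + δt F θ + (δt²/2) F² θ + (δt³/8) F³ θ‖ ≤ (1 + C·δt) ‖θ‖. -/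
open RealInnerProductSpace

/-- Three-stage scheme with coefficients `(1, 1, 1/2, 1/8)` for a skew-adjoint operator:
exact energy identity `‖θ + t F θ + (t²/2) F² θ + (t³/8) F³ θ‖² = ‖θ‖² + (t⁶/64) ‖F³ θ‖²`,
and stability under the 6/5-CFL condition `δt ≤ 2^{7/5} C^{1/5} M^{-6/5}`. -/
theorem RK3_type_skew_adjoint_stability
    {E : Type*} [NormedAddCommGroup E] [InnerProductSpace ℝ E]
    (F : E →L[ℝ] E) (hF : ∀ x y : E, ⟪F x, y⟫ = -⟪x, F y⟫) :
    (∀ (θ : E) (t : ℝ),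
      ‖θ + t • F θ + (t ^ 2 / 2) • (F ^ 2) θ + (t ^ 3 / 8) • (F ^ 3) θ‖ ^ 2 =
        ‖θ‖ ^ 2 + t ^ 6 / 64 * ‖(F ^ 3) θ‖ ^ 2) ∧
    (∀ (M : ℝ), 0 < M → (∀ x : E, ‖F x‖ ≤ M * ‖x‖) →
      ∀ (C δt : ℝ), 0 < C → 0 < δt →
        δt ≤ (2 : ℝ) ^ ((7 : ℝ) / 5) * C ^ ((1 : ℝ) / 5) * M ^ (-(6 : ℝ) / 5) →
        ∀ θ : E,
          ‖θ + δt • F θ + (δt ^ 2 / 2) • (F ^ 2) θ + (δt ^ 3 / 8) • (F ^ 3) θ‖ ≤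
            (1 + C * δt) * ‖θ‖) := by
  have key : ∀ (θ : E) (t : ℝ),
      ‖θ + t • F θ + (t ^ 2 / 2) • (F ^ 2) θ + (t ^ 3 / 8) • (F ^ 3) θ‖ ^ 2 =
        ‖θ‖ ^ 2 + t ^ 6 / 64 * ‖(F ^ 3) θ‖ ^ 2 := by
    intro θ t
    have e2 : (F ^ 2) θ = F (F θ) := by simp [pow_succ]
    have e3 : (F ^ 3) θ = F (F (F θ)) := by simp [pow_succ]
    rw [e2, e3]
    have z : ∀ x : E, ⟪x, F x⟫ = 0 := by
      intro x
      have h := hF x x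
      rw [real_inner_comm] at h
      linarith
    have h01 := z θ
    have h12 := z (F θ)
    have h23 := z (F (F θ))
    have h02 := hF θ (F θ)
    have h13 := hF (F θ) (F (F θ))
    have h03 := hF θ (F (F θ))
    simp only [← real_inner_self_eq_norm_sq, inner_add_left, inner_add_right,
      real_inner_smul_left, real_inner_smul_right]
    have c01 := real_inner_comm θ (F θ)
    have c02 := real_inner_comm θ (F (F θ))
    have c03 := real_inner_comm θ (F (F (F θ)))
    have c12 := real_inner_comm (F θ) (F (F θ))
    have c13 := real_inner_comm (F θ) (F (F (F θ)))
    have c23 := real_inner_comm (F (F θ)) (F (F (F θ)))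
    grind
  refine ⟨key, ?_⟩
  intro M hM hb C δt hC ht hle θ
  have h5 : δt ^ 5 * M ^ 6 ≤ 128 * C := by
    have h := pow_le_pow_left₀ ht.le hle 5
    have e : ((2 : ℝ) ^ ((7 : ℝ) / 5) * C ^ ((1 : ℝ) / 5) * M ^ (-(6 : ℝ) / 5)) ^ 5
        = 128 * C * (M ^ 6)⁻¹ := by
      rw [mul_pow, mul_pow, ← Real.rpow_mul_natCast (by norm_num), ← Real.rpow_mul_natCast hC.le,
        ← Real.rpow_mul_natCast hM.le]
      have a1 : (7 : ℝ) / 5 * ((5 : ℕ) : ℝ) = ((7 : ℕ) : ℝ) := by norm_num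
      have a2 : (1 : ℝ) / 5 * ((5 : ℕ) : ℝ) = 1 := by norm_num
      have a3 : -(6 : ℝ) / 5 * ((5 : ℕ) : ℝ) = -((6 : ℕ) : ℝ) := by norm_num
      rw [a1, a2, a3, Real.rpow_neg hM.le, Real.rpow_natCast, Real.rpow_natCast, Real.rpow_one]
      norm_num
    rw [e, ← div_eq_mul_inv, le_div_iff₀ (by positivity)] at h
    exact h
  have hn : ‖(F ^ 3) θ‖ ≤ M ^ 3 * ‖θ‖ := by
    have e3 : (F ^ 3) θ = F (F (F θ)) := by simp [pow_succ]
    rw [e3]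
    calc ‖F (F (F θ))‖ ≤ M * (M * (M * ‖θ‖)) :=
          (hb _).trans (by gcongr; exact (hb _).trans (by gcongr; exact hb _))
      _ = M ^ 3 * ‖θ‖ := by ring
  have hn2 := pow_le_pow_left₀ (norm_nonneg _) hn 2
  refine (sq_le_sq₀ (norm_nonneg _) (by positivity)).1 ?_
  rw [key θ δt]
  calc ‖θ‖ ^ 2 + δt ^ 6 / 64 * ‖(F ^ 3) θ‖ ^ 2
      ≤ ‖θ‖ ^ 2 + δt ^ 6 / 64 * (M ^ 3 * ‖θ‖) ^ 2 := by gcongr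
    _ = ‖θ‖ ^ 2 + (δt ^ 5 * M ^ 6) * (δt / 64 * ‖θ‖ ^ 2) := by ring
    _ ≤ ‖θ‖ ^ 2 + (128 * C) * (δt / 64 * ‖θ‖ ^ 2) := by gcongr
    _ ≤ ((1 + C * δt) * ‖θ‖) ^ 2 := by nlinarith [sq_nonneg (C * δt * ‖θ‖)]
end

section
/- Let E be a real inner product space and F : E → E a continuous linear map that is skew-adjoint, i.e. ⟨F x, y⟩ = -⟨x, F y⟩ for all x, y ∈ E. Set β₃ = (2-√2)/4 and β₄ = (3-2√2)/8. Then for every θ ∈ E and real t, the four-stage scheme with coefficients (1, 1, 1/2, β₃, β₄) satisfies the exact energy identity ‖θ + t F θ + (t²/2) F² θ + β₃ t³ F³ θ + β₄ t⁴ F⁴ θ‖² = ‖θ‖² + β₄² t⁸ ‖F⁴ θ‖². Moreover, if ‖F x‖ ≤ M ‖x‖ for all x ∈ E with M > 0, then for any C > 0 and any δt with 0 < δt ≤ (2C/β₄²)^{1/7} M^{-8/7}, one has ‖θ + δt F θ + (δt²/2) F² θ + β₃ δt³ F³ θ + β₄ δt⁴ F⁴ θ‖ ≤ (1 + C·δt)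 ‖θ‖. -/
open RealInnerProductSpace

/-- Four-stage scheme with coefficients `(1, 1, 1/2, (2-√2)/4, (3-2√2)/8)` for a
skew-adjoint operator: exact energy identity and stability under the 8/7-CFL condition
`δt ≤ (2C/β₄²)^{1/7} M^{-8/7}`. -/
theorem RK4_type_skew_adjoint_stability
    {E : Type*} [NormedAddCommGroup E] [InnerProductSpace ℝ E]
    (F : E →L[ℝ] E) (hF : ∀ x y : E, ⟪F x, y⟫ = -⟪x, F y⟫)
    (β₃ β₄ : ℝ) (hβ₃ : β₃ = (2 - Real.sqrt 2) / 4) (hβ₄ : β₄ = (3 - 2 * Real.sqrt 2) / 8) :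
    (∀ (θ : E) (t : ℝ),
      ‖θ + t • F θ + (t ^ 2 / 2) • (F ^ 2) θ + (β₃ * t ^ 3) • (F ^ 3) θ
          + (β₄ * t ^ 4) • (F ^ 4) θ‖ ^ 2 =
        ‖θ‖ ^ 2 + β₄ ^ 2 * t ^ 8 * ‖(F ^ 4) θ‖ ^ 2) ∧
    (∀ (M : ℝ), 0 < M → (∀ x : E, ‖F x‖ ≤ M * ‖x‖) →
      ∀ (C δt : ℝ), 0 < C → 0 < δt →
        δt ≤ (2 * C / β₄ ^ 2) ^ ((1 : ℝ) / 7) * M ^ (-(8 : ℝ) / 7) →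
        ∀ θ : E,
          ‖θ + δt • F θ + (δt ^ 2 / 2) • (F ^ 2) θ + (β₃ * δt ^ 3) • (F ^ 3) θ
              + (β₄ * δt ^ 4) • (F ^ 4) θ‖ ≤ (1 + C * δt) * ‖θ‖) := by
  have h2 : ∀ x, (F ^ 2) x = F (F x) := fun x => by simp [pow_succ]
  have h3 : ∀ x, (F ^ 3) x = F (F (F x)) := fun x => by simp [pow_succ]
  have h4 : ∀ x, (F ^ 4) x = F (F (F (F x))) := fun x => by simp [pow_succ]
  have hs : Real.sqrt 2 ^ 2 = 2 := Real.sq_sqrt (by norm_num)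
  have e1 : 1 / 4 + 2 * β₄ - 2 * β₃ = 0 := by rw [hβ₃, hβ₄]; ring
  have e2 : β₃ ^ 2 = β₄ := by rw [hβ₃, hβ₄]; linear_combination hs / 16
  have hb : 0 < β₄ := by
    have : Real.sqrt 2 < 3 / 2 := by
      rw [Real.sqrt_lt' (by norm_num)]; norm_num
    rw [hβ₄]; linarith
  have h0 : ∀ x : E, ⟪x, F x⟫ = 0 := fun x => by
    have := hF x x
    rw [real_inner_comm] at this
    linarith
  have hsk : ∀ x y : E, ⟪x, F y⟫ = -⟪F x, y⟫ := fun x y => by rw [hF]; ring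
  have energy : ∀ (θ : E) (t : ℝ),
      ‖θ + t • F θ + (t ^ 2 / 2) • (F ^ 2) θ + (β₃ * t ^ 3) • (F ^ 3) θ
          + (β₄ * t ^ 4) • (F ^ 4) θ‖ ^ 2 =
        ‖θ‖ ^ 2 + β₄ ^ 2 * t ^ 8 * ‖(F ^ 4) θ‖ ^ 2 := by
    intro θ t
    rw [h2, h3, h4]
    have q1 := h0 θ
    have q2 := hsk θ (F θ)
    have q3 := hsk θ (F (F θ))
    have q4 := hsk θ (F (F (F θ)))
    have q5 := h0 (F θ)
    have q6 := hsk (F θ) (F (F θ))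
    have q7 := hsk (F θ) (F (F (F θ)))
    have q8 := h0 (F (F θ))
    have q9 := hsk (F (F θ)) (F (F (F θ)))
    have q10 := h0 (F (F (F θ)))
    generalize F (F (F (F θ))) = d at *
    generalize F (F (F θ)) = c at *
    generalize F (F θ) = b at *
    generalize F θ = a at *
    rw [q5] at q3
    rw [q6] at q4
    rw [q8] at q7
    simp only [norm_add_sq_real, inner_add_left, inner_smul_left, inner_smul_right,
      norm_smul, mul_pow, Real.norm_eq_abs, sq_abs, q1, q2, q3, q4, q5, q6, q7, q8, q9, q10,
      real_inner_self_eq_norm_sq, conj_trivial]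
    linear_combination (t ^ 4 * ‖b‖ ^ 2) * e1 + (t ^ 6 * ‖c‖ ^ 2) * e2
  refine ⟨energy, ?_⟩
  intro M hM hFM C δt hC hδ hle θ
  have hpow : δt ^ 7 ≤ 2 * C / β₄ ^ 2 * (M ^ 8)⁻¹ := by
    have hk : (0:ℝ) ≤ 2 * C / β₄ ^ 2 := by positivity
    have := pow_le_pow_left₀ hδ.le hle 7
    rw [mul_pow, ← Real.rpow_mul_natCast hk, ← Real.rpow_mul_natCast hM.le] at this
    have g1 : (1:ℝ) / 7 * ((7:ℕ):ℝ) = 1 := by norm_num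
    have g2 : -(8:ℝ) / 7 * ((7:ℕ):ℝ) = -((8:ℕ):ℝ) := by norm_num
    rwa [g1, g2, Real.rpow_one, Real.rpow_neg hM.le, Real.rpow_natCast] at this
  have hkey : β₄ ^ 2 * δt ^ 8 * M ^ 8 ≤ 2 * C * δt := by
    have := mul_le_mul_of_nonneg_left hpow (by positivity : 0 ≤ β₄ ^ 2 * M ^ 8 * δt)
    calc β₄ ^ 2 * δt ^ 8 * M ^ 8 = β₄ ^ 2 * M ^ 8 * δt * δt ^ 7 := by ring
      _ ≤ _ := this
      _ = 2 * C * δt := by field_simp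
  have hd : ‖(F ^ 4) θ‖ ≤ M ^ 4 * ‖θ‖ := by
    rw [h4]
    calc ‖F (F (F (F θ)))‖ ≤ M * (M * (M * (M * ‖θ‖))) := by
          refine (hFM _).trans ?_
          gcongr
          refine (hFM _).trans ?_
          gcongr
          refine (hFM _).trans ?_
          gcongr
          exact hFM _
      _ = _ := by ring
  have hd2 := pow_le_pow_left₀ (norm_nonneg _) hd 2
  refine (pow_le_pow_iff_left₀ (norm_nonneg _) (by positivity) two_ne_zero).1 ?_
  rw [energy]
  calc ‖θ‖ ^ 2 + β₄ ^ 2 * δt ^ 8 * ‖(F ^ 4) θ‖ ^ 2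
      ≤ ‖θ‖ ^ 2 + β₄ ^ 2 * δt ^ 8 * (M ^ 4 * ‖θ‖) ^ 2 := by gcongr
    _ = ‖θ‖ ^ 2 + (β₄ ^ 2 * δt ^ 8 * M ^ 8) * ‖θ‖ ^ 2 := by ring
    _ ≤ ‖θ‖ ^ 2 + (2 * C * δt) * ‖θ‖ ^ 2 := by gcongr
    _ ≤ ((1 + C * δt) * ‖θ‖) ^ 2 := by
        have : 0 ≤ (C * δt * ‖θ‖) ^ 2 := sq_nonneg _
        linarith [this, (by ring : ((1 + C * δt) * ‖θ‖) ^ 2 = ‖θ‖ ^ 2 + (2 * C * δt) * ‖θ‖ ^ 2 + (C * δt * ‖θ‖) ^ 2)]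
end

section
/- Let E be a real inner product space and F : E → E a continuous linear map that is skew-adjoint, i.e. ⟨F x, y⟩ = -⟨x, F y⟩ for all x, y ∈ E. Then for every θ ∈ E and real t, the classical fourth-order Runge–Kutta scheme applied to the linear equation ∂_t u = F u satisfies the exact energy identity ‖θ + t F θ + (t²/2) F² θ + (t³/6) F³ θ + (t⁴/24) F⁴ θ‖² = ‖θ‖² - (t⁶/72) ‖F³ θ‖² + (t⁸/576) ‖F⁴ θ‖². -/
open RealInnerProductSpace

/-- Classical fourth-order Runge–Kutta scheme for a skew-adjoint operator: exact energy
identity `‖θ + t F θ + (t²/2) F² θ + (t³/6) F³ θ + (t⁴/24) F⁴ θ‖² =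
‖θ‖² - (t⁶/72) ‖F³ θ‖² + (t⁸/576) ‖F⁴ θ‖²`. -/
theorem classical_RK4_skew_adjoint_energy
    {E : Type*} [NormedAddCommGroup E] [InnerProductSpace ℝ E]
    (F : E →L[ℝ] E) (hF : ∀ x y : E, ⟪F x, y⟫ = -⟪x, F y⟫)
    (θ : E) (t : ℝ) :
    ‖θ + t • F θ + (t ^ 2 / 2) • (F ^ 2) θ + (t ^ 3 / 6) • (F ^ 3) θ
        + (t ^ 4 / 24) • (F ^ 4) θ‖ ^ 2 =
      ‖θ‖ ^ 2 - t ^ 6 / 72 * ‖(F ^ 3) θ‖ ^ 2 + t ^ 8 / 576 * ‖(F ^ 4) θ‖ ^ 2 := by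
  have p2 : (F ^ 2) θ = F (F θ) := by simp [pow_succ]
  have p3 : (F ^ 3) θ = F (F (F θ)) := by simp [pow_succ]
  have p4 : (F ^ 4) θ = F (F (F (F θ))) := by simp [pow_succ]
  rw [p2, p3, p4]
  have h1 : ⟪θ, F θ⟫ = 0 := by
    have h := real_inner_comm θ (F θ)
    simp only [hF] at h
    linarith
  have h3 : ⟪θ, F (F (F θ))⟫ = 0 := by
    have h := real_inner_comm θ (F (F (F θ)))
    simp only [hF] at h
    linarith
  have h5 : ⟪θ, F (F (F (F (F θ))))⟫ = 0 := by
    have h := real_inner_comm θ (F (F (F (F (F θ)))))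
    simp only [hF] at h
    linarith
  have h7 : ⟪θ, F (F (F (F (F (F (F θ))))))⟫ = 0 := by
    have h := real_inner_comm θ (F (F (F (F (F (F (F θ)))))))
    simp only [hF] at h
    linarith
  simp only [← real_inner_self_eq_norm_sq, inner_add_left, inner_add_right,
    real_inner_smul_left, real_inner_smul_right, hF, h1, h3, h5, h7]
  ring
end

section
/- Let E be a real inner product space and F : E → E a continuous linear map that is skew-adjoint, i.e. ⟨F x, y⟩ = -⟨x, F y⟩ for all x, y ∈ E. Then for every θ ∈ E and real t, the five-stage scheme with coefficients β = (1, 1, 1/2, 1/6, 1/24, 1/144) satisfies the exact energy identity ‖θ + t F θ + (t²/2) F² θ + (t³/6) F³ θ + (t⁴/24) F⁴ θ + (t⁵/144) F⁵ θ‖² = ‖θ‖² - (t⁸/1728) ‖F⁴ θ‖² + (t^{10}/20736) ‖F⁵ θ‖². -/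
open RealInnerProductSpace

/-- "Scheme 5" with coefficients `(1, 1, 1/2, 1/6, 1/24, 1/144)` for a skew-adjoint
operator: exact energy identity
`‖θ + t F θ + (t²/2) F² θ + (t³/6) F³ θ + (t⁴/24) F⁴ θ + (t⁵/144) F⁵ θ‖² =
‖θ‖² - (t⁸/1728) ‖F⁴ θ‖² + (t¹⁰/20736) ‖F⁵ θ‖²`. -/
theorem scheme5_skew_adjoint_energy
    {E : Type*} [NormedAddCommGroup E] [InnerProductSpace ℝ E]
    (F : E →L[ℝ] E) (hF : ∀ x y : E, ⟪F x, y⟫ = -⟪x, F y⟫)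
    (θ : E) (t : ℝ) :
    ‖θ + t • F θ + (t ^ 2 / 2) • (F ^ 2) θ + (t ^ 3 / 6) • (F ^ 3) θ
        + (t ^ 4 / 24) • (F ^ 4) θ + (t ^ 5 / 144) • (F ^ 5) θ‖ ^ 2 =
      ‖θ‖ ^ 2 - t ^ 8 / 1728 * ‖(F ^ 4) θ‖ ^ 2 + t ^ 10 / 20736 * ‖(F ^ 5) θ‖ ^ 2 := by
  have h2 : (F ^ 2) θ = F (F θ) := rfl
  have h3 : (F ^ 3) θ = F (F (F θ)) := rfl
  have h4 : (F ^ 4) θ = F (F (F (F θ))) := rfl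
  have h5 : (F ^ 5) θ = F (F (F (F (F θ)))) := rfl
  rw [h2, h3, h4, h5]
  simp only [← real_inner_self_eq_norm_sq, inner_add_left, inner_add_right,
    real_inner_smul_left, real_inner_smul_right, hF]
  ring
end

section
/- Let d ≥ 1 and let u : ℝ^d → ℝ^d be a continuously differentiable vector field with divergence zero everywhere, i.e. Σ_{i=1}^d ∂_{x_i} u_i(x) = 0 for all x ∈ ℝ^d. Let v : ℝ^d → ℝ^d be a continuously differentiable vector field with compact support. Then ∫_{ℝ^d} ⟨v(x), (u·∇)v(x)⟩ dx = 0, where (u·∇)v(x) denotes the Fréchet derivative of v at x applied to the vector u(x), and ⟨·,·⟩ is the Euclidean inner product on ℝ^d. -/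
open MeasureTheory Finset RealInnerProductSpace

/-- Energy conservation of the convective term for a divergence-free velocity field on
`ℝ^d`: `∫ ⟪v, (u·∇)v⟫ = 0` for a compactly supported `C¹` vector field `v`. -/
theorem convective_term_energy_conservation
    (d : ℕ) (hd : 1 ≤ d)
    (u : EuclideanSpace ℝ (Fin d) → EuclideanSpace ℝ (Fin d))
    (hu : ContDiff ℝ 1 u)
    (hdiv : ∀ x, ∑ i : Fin d, fderiv ℝ u x (EuclideanSpace.single i 1) i = 0)
    (v : EuclideanSpace ℝ (Fin d) → EuclideanSpace ℝ (Fin d))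
    (hv : ContDiff ℝ 1 v) (hvc : HasCompactSupport v) :
    ∫ x, ⟪v x, fderiv ℝ v x (u x)⟫ = 0 := by
  set g : EuclideanSpace ℝ (Fin d) → ℝ := fun x => ⟪v x, v x⟫ with hgdef
  have hg : ContDiff ℝ 1 g := hv.inner ℝ hv
  have hgc : HasCompactSupport g := by
    refine hvc.mono ?_
    intro x hx hx0
    exact hx (by simp [hgdef, hx0])
  have hvd : ∀ x, DifferentiableAt ℝ v x := fun x => hv.differentiable (by norm_num) x
  have hud : ∀ x, DifferentiableAt ℝ u x := fun x => hu.differentiable (by norm_num) x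
  have hgd : ∀ x, DifferentiableAt ℝ g x := fun x => hg.differentiable (by norm_num) x
  have hg' : ∀ x w, fderiv ℝ g x w = 2 * ⟪v x, fderiv ℝ v x w⟫ := by
    intro x w
    rw [hgdef, fderiv_inner_apply ℝ (hvd x) (hvd x), real_inner_comm (v x)]
    ring
  have hui : ∀ i : Fin d, ContDiff ℝ 1 (fun x => u x i) := by
    intro i
    exact (EuclideanSpace.proj i : EuclideanSpace ℝ (Fin d) →L[ℝ] ℝ).contDiff.comp hu
  have hui' : ∀ (i : Fin d) x w, fderiv ℝ (fun x => u x i) x w = fderiv ℝ u x w i := by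
    intro i x w
    have := ((EuclideanSpace.proj i : EuclideanSpace ℝ (Fin d) →L[ℝ] ℝ).hasFDerivAt.comp x
      (hud x).hasFDerivAt).fderiv
    have h2 := congrArg (fun L => L w) this
    exact h2
  have hgc' : ∀ w, HasCompactSupport (fun x => fderiv ℝ g x w) := fun w =>
    hgc.fderiv_apply (𝕜 := ℝ) w
  have hgcont' : ∀ w, Continuous (fun x => fderiv ℝ g x w) := fun w =>
    (hg.continuous_fderiv (by norm_num)).clm_apply continuous_const
  have hucont' : ∀ (i : Fin d) w, Continuous (fun x => fderiv ℝ (fun x => u x i) x w) :=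
    fun i w => ((hui i).continuous_fderiv (by norm_num)).clm_apply continuous_const
  have i1 : ∀ (i : Fin d) w, Integrable (fun x => fderiv ℝ (fun x => u x i) x w * g x) :=
    fun i w => ((hucont' i w).mul hg.continuous).integrable_of_hasCompactSupport hgc.mul_left
  have i2 : ∀ (i : Fin d) w, Integrable (fun x => u x i * fderiv ℝ g x w) :=
    fun i w => ((hui i).continuous.mul (hgcont' w)).integrable_of_hasCompactSupport
      (hgc' w).mul_left
  have i3 : ∀ (i : Fin d), Integrable (fun x => u x i * g x) :=
    fun i => ((hui i).continuous.mul hg.continuous).integrable_of_hasCompactSupport hgc.mul_left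
  have parts : ∀ i : Fin d, ∫ x, u x i * fderiv ℝ g x (EuclideanSpace.single i 1)
      = - ∫ x, fderiv ℝ (fun x => u x i) x (EuclideanSpace.single i 1) * g x := fun i =>
    integral_mul_fderiv_eq_neg_fderiv_mul_of_integrable (i1 i _) (i2 i _) (i3 i)
      (fun x _ => (hui i).differentiable (by norm_num) x) (fun x _ => hgd x)
  have expand : ∀ x, ⟪v x, fderiv ℝ v x (u x)⟫
      = (1 / 2) * ∑ i : Fin d, u x i * fderiv ℝ g x (EuclideanSpace.single i 1) := by
    intro x
    have hx : u x = ∑ i : Fin d, u x i • EuclideanSpace.single i (1 : ℝ) := by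
      have := (EuclideanSpace.basisFun (Fin d) ℝ).sum_repr (u x)
      simpa using this.symm
    have h1 : fderiv ℝ g x (u x)
        = ∑ i : Fin d, u x i * fderiv ℝ g x (EuclideanSpace.single i 1) := by
      conv_lhs => rw [hx]
      simp [map_sum]
    rw [← h1, hg']
    ring
  simp_rw [expand]
  rw [integral_const_mul, integral_finsetSum _ (fun i _ => i2 i _)]
  simp_rw [parts]
  rw [Finset.sum_neg_distrib, ← integral_finsetSum _ (fun i _ => i1 i _)]
  simp_rw [hui', ← Finset.sum_mul, hdiv]
  simp
end

section
/- Let K ≥ 0 be a natural number and α₀, …, α_K real numbers with Σ_{k=0}^{K} α_k = 1. For real θ near 0, define the complex number ζ(θ) = (e^{iθ} - 1) / (Σ_{k=0}^{K} α_k e^{-ikθ}) (the denominator tends to 1 as θ → 0, so ζ(θ) is well defined on a neighborhood of 0). Then, as θ → 0, Re ζ(θ) = -(Σ_{k=0}^{K} k α_k + 1/2) θ² + o(θ²); that is, the function θ ↦ Re ζ(θ) + (Υ₁ + 1/2) θ², where Υ₁ = Σ_{k=0}^{K} k α_k, is o(θ²) at 0. -/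
open Complex Filter Asymptotics Topology Finset

/-- Tangency of the Adams–Bashforth stability-domain boundary to the imaginary axis:
for a consistent scheme (`∑ α_k = 1`), the boundary curve
`ζ(θ) = (e^{iθ} - 1)/(∑ α_k e^{-ikθ})` satisfies
`Re ζ(θ) = -(Υ₁ + 1/2) θ² + o(θ²)` as `θ → 0`, where `Υ₁ = ∑ k α_k`. -/
theorem adams_bashforth_boundary_tangency
    (K : ℕ) (α : ℕ → ℝ) (hcons : ∑ k ∈ range (K + 1), α k = 1)
    (Υ₁ : ℝ) (hΥ : Υ₁ = ∑ k ∈ range (K + 1), (k : ℝ) * α k) :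
    (fun θ : ℝ =>
        ((Complex.exp (Complex.I * θ) - 1) /
            (∑ k ∈ range (K + 1), (α k : ℂ) * Complex.exp (-(Complex.I * k * θ)))).re
          + (Υ₁ + 1 / 2) * θ ^ 2)
      =o[𝓝 (0 : ℝ)] fun θ : ℝ => θ ^ 2 := by
  set D : ℝ → ℂ := fun θ =>
    ∑ k ∈ range (K + 1), (α k : ℂ) * Complex.exp (-(Complex.I * k * θ)) with hD
  have hconsC : ∑ k ∈ range (K + 1), (α k : ℂ) = 1 := by exact_mod_cast hcons
  have hΥC : (Υ₁ : ℂ) = ∑ k ∈ range (K + 1), (k : ℂ) * α k := by rw [hΥ]; push_cast; rfl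
  have hD0 : D 0 = 1 := by simp [hD, hconsC]
  have hDd : HasDerivAt D (-(Complex.I * Υ₁)) 0 := by
    have h : HasDerivAt D (∑ k ∈ range (K + 1), (α k : ℂ) * (-(Complex.I * k))) 0 := by
      apply HasDerivAt.fun_sum
      intro k _
      have h1 : HasDerivAt (fun θ : ℝ => -(Complex.I * k * (θ : ℂ))) (-(Complex.I * k * 1)) 0 :=
        ((Complex.ofRealCLM.hasDerivAt (x := (0 : ℝ))).const_mul (Complex.I * k)).neg
      have h2 := (h1.cexp).const_mul (α k : ℂ)
      simpa using h2
    convert h using 1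
    rw [hΥC, Finset.mul_sum, ← Finset.sum_neg_distrib]
    exact Finset.sum_congr rfl fun k _ => by ring
  have hR2 : (fun θ : ℝ => D θ - 1 + Complex.I * Υ₁ * θ) =o[𝓝 (0 : ℝ)] fun θ : ℝ => θ := by
    have h := hDd.isLittleO
    simp only [hD0, sub_zero] at h
    refine h.congr_left fun θ => ?_
    simp only [Complex.real_smul]
    ring
  have hI : Tendsto (fun θ : ℝ => Complex.I * (θ : ℂ)) (𝓝 0) (𝓝 0) := by
    have : Continuous (fun θ : ℝ => Complex.I * (θ : ℂ)) := by fun_prop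
    simpa using this.tendsto 0
  have hR1 : (fun θ : ℝ => Complex.exp (Complex.I * θ) - 1 - Complex.I * θ + (θ : ℂ) ^ 2 / 2)
      =o[𝓝 (0 : ℝ)] fun θ : ℝ => θ ^ 2 := by
    have h := (Complex.exp_sub_sum_range_succ_isLittleO_pow 2).comp_tendsto hI
    refine (h.congr_left fun θ => ?_).trans_isBigO (isBigO_of_le _ fun θ => ?_)
    · simp [Finset.sum_range_succ, mul_pow]
      ring
    · simp
  have hx : (fun θ : ℝ => (θ : ℂ)) =O[𝓝 (0 : ℝ)] fun θ : ℝ => θ :=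
    isBigO_of_le _ fun θ => by simp
  have hone : (fun θ : ℝ => (Complex.I - ((Υ₁ : ℂ) + 1 / 2) * θ)) =O[𝓝 (0 : ℝ)]
      fun _ => (1 : ℝ) := by
    have : Continuous (fun θ : ℝ => (Complex.I - ((Υ₁ : ℂ) + 1 / 2) * θ)) := by fun_prop
    exact (this.tendsto 0).isBigO_one ℝ
  have hA : (fun θ : ℝ => (D θ - 1 + Complex.I * Υ₁ * θ) *
      ((θ : ℂ) * (Complex.I - ((Υ₁ : ℂ) + 1 / 2) * θ))) =o[𝓝 (0 : ℝ)] fun θ : ℝ => θ ^ 2 := by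
    refine (hR2.mul_isBigO (hx.mul hone)).congr_right fun θ => by ring
  have hB : (fun θ : ℝ => Complex.I * Υ₁ * ((Υ₁ : ℂ) + 1 / 2) * (θ : ℂ) ^ 3)
      =o[𝓝 (0 : ℝ)] fun θ : ℝ => θ ^ 2 := by
    exact ((hx.pow 3).trans_isLittleO (isLittleO_pow_pow (by norm_num))).const_mul_left _
  have hDc : Tendsto D (𝓝 0) (𝓝 1) := hD0 ▸ hDd.continuousAt.tendsto
  have hne : ∀ᶠ θ in 𝓝 (0 : ℝ), D θ ≠ 0 := hDc.eventually_ne one_ne_zero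
  have hinv : (fun θ => (D θ)⁻¹) =O[𝓝 (0 : ℝ)] fun _ => (1 : ℝ) :=
    (hDc.inv₀ one_ne_zero).isBigO_one ℝ
  have hmain : (fun θ : ℝ => (Complex.exp (Complex.I * θ) - 1) / D θ - Complex.I * θ
      + ((Υ₁ : ℂ) + 1 / 2) * (θ : ℂ) ^ 2) =o[𝓝 (0 : ℝ)] fun θ : ℝ => θ ^ 2 := by
    refine ((((hR1.sub hA).sub hB).mul_isBigO hinv).congr' ?_ ?_)
    · filter_upwards [hne] with θ hθ
      field_simp
      ring_nf
      simp only [Complex.I_sq]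
      ring
    · exact Eventually.of_forall fun θ => by simp
  refine IsBigO.trans_isLittleO (isBigO_of_le _ fun θ => ?_) hmain
  have hre : ((Complex.exp (Complex.I * θ) - 1) / D θ).re + (Υ₁ + 1 / 2) * θ ^ 2
      = ((Complex.exp (Complex.I * θ) - 1) / D θ - Complex.I * θ
      + ((Υ₁ : ℂ) + 1 / 2) * (θ : ℂ) ^ 2).re := by
    have h : ((Υ₁ : ℂ) + 1 / 2) * (θ : ℂ) ^ 2 = (((Υ₁ + 1 / 2) * θ ^ 2 : ℝ) : ℂ) := by
      push_cast; rfl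
    rw [h, Complex.add_re, Complex.sub_re, Complex.ofReal_re]
    simp
  rw [hre, Real.norm_eq_abs]
  exact Complex.abs_re_le_norm _
end
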